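/- Let m = 4m' + 1 with m' ≥ 1, let 1 ≤ K ≤ N, and let ψ ∈ Λ_{2K−2}(B_N). Then the function F(u,ℓ) = ψ(u)·D̄_{m'}(ℓ) lies in PW_{2K}(B_N □ C_m) and satisfies PQF = (1/2 + 1/(2m))·F, where P is the orthogonal projection onto PW_{2K}(B_N □ C_m) and Q is truncation to the zero slice. Moreover, if {ψ_ν} is an orthonormal basis of Λ_{2K−2}(B_N), then every F in the span of {f ⊗ g : f ∈ Λ_{2K−2}(B_N), g ∈ PW_2(C_m)} satisfies Σ_ν |⟨F, Q(ψ_ν ⊗ D̄_{m'})⟩|² = (1/2 + 1/(2m))·‖QF‖². -/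

import Mathlib

open Complex Finset
open scoped Real Classical

noncomputable section

/-- Vertices of the Boolean cube B_N. -/
abbrev Vtx (N : ℕ) := Fin N → ZMod 2

/-- The inner product on ℓ²: ⟨f,g⟩ = Σ f·conj(g). -/
def ip {α : Type*} [Fintype α] (f g : α → ℂ) : ℂ :=
  ∑ x, f x * (starRingEnd ℂ) (g x)

/-- Cube adjacency: differ in exactly one coordinate. -/
def cubeAdj {N : ℕ} (v w : Vtx N) : Prop :=
  (Finset.univ.filter fun i => v i ≠ w i).card = 1

instance {N : ℕ} (v w : Vtx N) : Decidable (cubeAdj v w) := by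
  unfold cubeAdj; infer_instance

/-- Unnormalized Laplacian of the Boolean cube. -/
def cubeLap (N : ℕ) (f : Vtx N → ℂ) : Vtx N → ℂ :=
  fun v => ∑ w ∈ Finset.univ.filter (fun w => cubeAdj v w), (f v - f w)

/-- Unnormalized Laplacian of the cycle graph C_m:
(L f)(ℓ) = 2 f(ℓ) − f(ℓ+1) − f(ℓ−1). -/
def cycLap (m : ℕ) (f : ZMod m → ℂ) : ZMod m → ℂ :=
  fun ℓ => 2 * f ℓ - f (ℓ + 1) - f (ℓ - 1)

/-- Unnormalized Laplacian of the Cartesian product B_N □ C_m: each vertex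
(u,ℓ) has its cube neighbors (w,ℓ) and its cycle neighbors (u,ℓ±1). -/
def prodLap (N m : ℕ) (F : Vtx N × ZMod m → ℂ) : Vtx N × ZMod m → ℂ :=
  fun x => cubeLap N (fun u => F (u, x.2)) x.1 +
    (2 * F x - F (x.1, x.2 + 1) - F (x.1, x.2 - 1))

/-- Paley–Wiener space of B_N: span of Laplacian eigenvectors with
eigenvalue at most Ω. -/
def PWcube (N : ℕ) (Ω : ℝ) : Submodule ℂ (Vtx N → ℂ) :=
  Submodule.span ℂ {f | ∃ μ : ℝ, μ ≤ Ω ∧ cubeLap N f = fun v => (μ : ℂ) * f v}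

/-- Paley–Wiener space of C_m: span of Laplacian eigenvectors with
eigenvalue at most Ω. -/
def PWcyc (m : ℕ) (Ω : ℝ) : Submodule ℂ (ZMod m → ℂ) :=
  Submodule.span ℂ {g | ∃ μ : ℝ, μ ≤ Ω ∧ cycLap m g = fun ℓ => (μ : ℂ) * g ℓ}

/-- Paley–Wiener space of B_N □ C_m: span of Laplacian eigenvectors with
eigenvalue at most Ω. -/
def PWprod (N m : ℕ) (Ω : ℝ) : Submodule ℂ (Vtx N × ZMod m → ℂ) :=
  Submodule.span ℂ {F | ∃ μ : ℝ, μ ≤ Ω ∧ prodLap N m F = fun x => (μ : ℂ) * F x}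

/-- Truncation Q to the zero B_N-slice. -/
def Qslice (N m : ℕ) (F : Vtx N × ZMod m → ℂ) : Vtx N × ZMod m → ℂ :=
  fun x => if x.2 = 0 then F x else 0

/-- Component (i): span of all f ⊗ g with f ∈ PW_{2K−4}(B_N), g ∈ ℓ²(C_m). -/
def S1 (N K m : ℕ) : Submodule ℂ (Vtx N × ZMod m → ℂ) :=
  Submodule.span ℂ {F | ∃ (f : Vtx N → ℂ) (g : ZMod m → ℂ),
    f ∈ PWcube N (2 * (K : ℝ) - 4) ∧ F = fun x => f x.1 * g x.2}

/-- Component (ii): span of all f ⊗ g with f ∈ Λ_{2K−2}(B_N), g ∈ PW_2(C_m). -/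
def S2 (N K m : ℕ) : Submodule ℂ (Vtx N × ZMod m → ℂ) :=
  Submodule.span ℂ {F | ∃ (f : Vtx N → ℂ) (g : ZMod m → ℂ),
    (cubeLap N f = fun v => ((2 * (K : ℝ) - 2 : ℝ) : ℂ) * f v) ∧
    g ∈ PWcyc m 2 ∧ F = fun x => f x.1 * g x.2}

/-- Component (iii): span of all f ⊗ g with f ∈ Λ_{2K}(B_N), g constant. -/
def S3 (N K m : ℕ) : Submodule ℂ (Vtx N × ZMod m → ℂ) :=
  Submodule.span ℂ {F | ∃ (f : Vtx N → ℂ) (c : ℂ),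
    (cubeLap N f = fun v => ((2 * (K : ℝ) : ℝ) : ℂ) * f v) ∧
    F = fun x => f x.1 * c}

/-- The Dirichlet kernel D_n(ℓ) = Σ_{k=−n}^{n} e^{2πikℓ/m} on ZMod m. -/
def dirK (m n : ℕ) : ZMod m → ℂ :=
  fun ℓ => ∑ k ∈ Finset.Icc (-(n : ℤ)) (n : ℤ),
    Complex.exp (2 * (π : ℂ) * Complex.I * k * ℓ.val / m)

/-- The normalized Dirichlet kernel D̄_n = D_n/√(m(2n+1)). -/
def dirKbar (m n : ℕ) : ZMod m → ℂ :=
  fun ℓ => dirK m n ℓ / (Real.sqrt (m * (2 * n + 1)) : ℂ)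

/-!
Let `L` be symmetric with `L ψ = λ ψ`. Pairing a function `G` on `V × ZMod m` with `ψ` slice by
slice leaves a function `g` on the cycle, and the symmetry of `L` turns an eigenvalue `μ` of `G`
into the eigenvalue `μ - λ` of `g`. So `G ∈ PW_{λ+ω}` gives `g ∈ PW_ω(C_m)`, whose Fourier support
is the band `[-n, n]` on which `D_n` reproduces: `∑ D_n g = m g(0)`. Since truncation only sees
`D_n(0) = 2n + 1`, the pairings of `G` with `Q(ψ ⊗ D̄_n)` and with `ψ ⊗ D̄_n` are in the ratio
`(2n + 1)/m`. The norm identity is Parseval's on the zero slice, as `|D̄_n(0)|² = (2n + 1)/m`.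
For `m = 4n + 1` the threshold `ω = 2` cuts out exactly the band `[-n, n]`.
-/

section InnerProduct

variable {α β ι : Type*} [Fintype α]

lemma ip_eq_inner (f g : α → ℂ) : ip f g = inner ℂ (WithLp.toLp 2 g) (WithLp.toLp 2 f) := rfl

lemma ip_zero_right (f : α → ℂ) : ip f 0 = 0 := by
  simp [ip]

lemma ip_add_right (f g h : α → ℂ) : ip f (g + h) = ip f g + ip f h := by
  simp [ip, mul_add, sum_add_distrib]

lemma ip_sub_right (f g h : α → ℂ) : ip f (g - h) = ip f g - ip f h := by
  simp [ip, mul_sub]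

lemma ip_smul_left (c : ℂ) (f g : α → ℂ) : ip (c • f) g = c * ip f g := by
  simp [ip, mul_sum, mul_assoc]

lemma ip_smul_right (c : ℂ) (f g : α → ℂ) : ip f (c • g) = starRingEnd ℂ c * ip f g := by
  simp [ip, mul_sum, mul_left_comm]

lemma sum_norm_sq_ip_of_mem_span [Fintype ι] [DecidableEq ι] {e : ι → α → ℂ}
    (he : ∀ i j, ip (e i) (e j) = if i = j then 1 else 0) {f : α → ℂ}
    (hf : f ∈ Submodule.span ℂ (Set.range e)) :
    ∑ i, ‖ip f (e i)‖ ^ 2 = ∑ a, ‖f a‖ ^ 2 := by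
  have orthonormal : Orthonormal ℂ fun i => WithLp.toLp 2 (e i) :=
    orthonormal_iff_ite.2 fun i j => (he j i).trans (by simp only [eq_comm])
  obtain ⟨c, rfl⟩ := (Submodule.mem_span_range_iff_exists_fun ℂ).1 hf
  have expand : WithLp.toLp 2 (∑ i, c i • e i) = ∑ i, c i • WithLp.toLp 2 (e i) := by
    simp only [WithLp.toLp_sum, WithLp.toLp_smul]
  have norm_sq : ∑ i, ‖c i‖ ^ 2 = ‖WithLp.toLp 2 (∑ i, c i • e i)‖ ^ 2 := by
    rw [← Complex.ofReal_inj, Complex.ofReal_pow, ← Complex.coe_algebraMap,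
      ← inner_self_eq_norm_sq_to_K (𝕜 := ℂ), expand, orthonormal.inner_sum]
    simp [Complex.conj_mul']
  simp_rw [ip_eq_inner, expand, orthonormal.inner_right_fintype]
  rw [norm_sq, EuclideanSpace.norm_sq_eq]

/-- The elementary tensor `f ⊗ g`, as a function on the product. -/
def tensor (f : α → ℂ) (g : β → ℂ) : α × β → ℂ :=
  fun x => f x.1 * g x.2

/-- The partial inner product over `α`: it pairs `ψ` with each `α`-slice of `G`, leaving a function
on `β`. Like `ip`, it is conjugate-linear in `G`. -/
def partialIp (ψ : α → ℂ) (G : α × β → ℂ) : β → ℂ :=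
  fun b => ip ψ fun a => G (a, b)

lemma ip_tensor_left [Fintype β] (f : α → ℂ) (g : β → ℂ) (G : α × β → ℂ) :
    ip (tensor f g) G = ∑ b, g b * partialIp f G b := by
  simp only [ip, tensor, partialIp, Fintype.sum_prod_type_right, mul_sum]
  exact sum_congr rfl fun b _ => sum_congr rfl fun a _ => by ring

end InnerProduct

section ZeroSlice

variable {V : Type*} [Fintype V] {m : ℕ} [NeZero m]

/-- Truncation of a function on `V × ZMod m` to the slice `V × {0}`; for `V` the Boolean cube this
is `Qslice`. -/
def truncateZero (F : V × ZMod m → ℂ) : V × ZMod m → ℂ :=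
  fun x => if x.2 = 0 then F x else 0

lemma sum_eq_sum_zero_slice {M : Type*} [AddCommMonoid M] {f : V × ZMod m → M}
    (hf : ∀ x, x.2 ≠ 0 → f x = 0) : ∑ x, f x = ∑ u, f (u, 0) := by
  rw [Fintype.sum_prod_type]
  exact sum_congr rfl fun u _ => Fintype.sum_eq_single 0 fun l hl => hf (u, l) hl

lemma ip_truncateZero_left (F G : V × ZMod m → ℂ) :
    ip (truncateZero F) G = ip (fun u => F (u, 0)) fun u => G (u, 0) := by
  rw [ip, sum_eq_sum_zero_slice fun x hx => by simp [truncateZero, hx]]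
  simp [ip, truncateZero]

lemma ip_truncateZero_right (F G : V × ZMod m → ℂ) :
    ip F (truncateZero G) = ip (fun u => F (u, 0)) fun u => G (u, 0) := by
  rw [ip, sum_eq_sum_zero_slice fun x hx => by simp [truncateZero, hx]]
  simp [ip, truncateZero]

lemma sum_norm_sq_truncateZero (F : V × ZMod m → ℂ) :
    ∑ x, ‖truncateZero F x‖ ^ 2 = ∑ u, ‖F (u, 0)‖ ^ 2 := by
  rw [sum_eq_sum_zero_slice fun x hx => by simp [truncateZero, hx]]
  simp [truncateZero]

lemma ip_truncateZero_tensor_left (f : V → ℂ) (g : ZMod m → ℂ) (G : V × ZMod m → ℂ) :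
    ip (truncateZero (tensor f g)) G = g 0 * partialIp f G 0 := by
  have slice : (fun u => tensor f g (u, 0)) = g 0 • f := funext fun u => mul_comm _ _
  rw [ip_truncateZero_left, slice, ip_smul_left, partialIp]

lemma ip_truncateZero_tensor_right (F : V × ZMod m → ℂ) (f : V → ℂ) (g : ZMod m → ℂ) :
    ip F (truncateZero (tensor f g)) = starRingEnd ℂ (g 0) * ip (fun u => F (u, 0)) f := by
  have slice : (fun u => tensor f g (u, 0)) = g 0 • f := funext fun u => mul_comm _ _
  rw [ip_truncateZero_right, slice, ip_smul_right]

end ZeroSlice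

section Cycle

/-- The eigenvalue `2 - 2 cos (2πk/m)` of the cycle Laplacian at the frequency `k`. -/
def cycEig (m : ℕ) (k : ℤ) : ℝ :=
  2 - 2 * Real.cos (2 * π * k / m)

lemma cycEig_neg (m : ℕ) (k : ℤ) : cycEig m (-k) = cycEig m k := by
  simp [cycEig, neg_div]

lemma cycEig_le_cycEig {m : ℕ} {j k : ℤ} (hjk : |j| ≤ |k|) (hk : 2 * |k| ≤ m) :
    cycEig m j ≤ cycEig m k := by
  have angle_abs (i : ℤ) : |2 * π * i / m| = 2 * π * |(i : ℝ)| / m := by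
    rw [abs_div, abs_mul, abs_of_pos Real.two_pi_pos, Nat.abs_cast]
  have hjk' : |(j : ℝ)| ≤ |(k : ℝ)| := mod_cast hjk
  have hk' : 2 * |(k : ℝ)| ≤ m := mod_cast hk
  have angle_le_pi : 2 * π * |(k : ℝ)| / m ≤ π :=
    div_le_of_le_mul₀ m.cast_nonneg Real.pi_pos.le (by nlinarith [Real.pi_pos])
  have cos_le : Real.cos (2 * π * k / m) ≤ Real.cos (2 * π * j / m) := by
    rw [← Real.cos_abs, ← Real.cos_abs (2 * π * j / m), angle_abs, angle_abs]
    exact Real.cos_le_cos_of_nonneg_of_le_pi (by positivity) angle_le_pi (by gcongr)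
  unfold cycEig
  linarith

lemma cycEig_le_two {n m : ℕ} (h : 4 * n ≤ m) : cycEig m n ≤ 2 := by
  have h' : 4 * (n : ℝ) ≤ m := mod_cast h
  have angle_le : 2 * π * n / m ≤ π / 2 :=
    div_le_of_le_mul₀ m.cast_nonneg Real.pi_div_two_pos.le (by nlinarith [Real.pi_pos])
  have angle_nonneg : 0 ≤ 2 * π * n / m := by positivity
  have cos_nonneg : 0 ≤ Real.cos (2 * π * n / m) :=
    Real.cos_nonneg_of_neg_pi_div_two_le_of_le (by linarith [Real.pi_pos]) angle_le
  rw [cycEig, Int.cast_natCast]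
  linarith

lemma two_lt_cycEig {n m : ℕ} (h : m < 4 * n) (h' : 2 * n ≤ m) : 2 < cycEig m n := by
  have hm : (0 : ℝ) < m := mod_cast (by omega : 0 < m)
  have lower : (m : ℝ) < 4 * n := mod_cast h
  have upper : 2 * (n : ℝ) ≤ m := mod_cast h'
  have cos_neg : Real.cos (2 * π * n / m) < 0 := by
    apply Real.cos_neg_of_pi_div_two_lt_of_lt
    · rw [lt_div_iff₀ hm]
      nlinarith [Real.pi_pos]
    · rw [div_lt_iff₀ hm]
      nlinarith [Real.pi_pos]
  rw [cycEig, Int.cast_natCast]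
  linarith

variable {m : ℕ} [NeZero m]

lemma two_sub_stdAddChar_sub (k : ℤ) :
    (2 - ZMod.stdAddChar (k : ZMod m) - ZMod.stdAddChar (-(k : ZMod m)) : ℂ) = cycEig m k := by
  rw [← Int.cast_neg, ZMod.stdAddChar_coe, ZMod.stdAddChar_coe, sub_sub, cycEig]
  push_cast
  rw [Complex.two_cos]
  ring_nf

lemma cycLap_stdAddChar (k : ℤ) :
    cycLap m (fun l => ZMod.stdAddChar ((k : ZMod m) * l)) =
      fun l => (cycEig m k : ℂ) * ZMod.stdAddChar ((k : ZMod m) * l) := by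
  funext l
  simp only [cycLap, ← two_sub_stdAddChar_sub, sub_eq_add_neg l, mul_add, mul_neg, mul_one,
    AddChar.map_add_eq_mul]
  ring

lemma dft_comp_add_right (g : ZMod m → ℂ) (a k : ZMod m) :
    ZMod.dft (fun l => g (l + a)) k = ZMod.stdAddChar (a * k) * ZMod.dft g k := by
  simp only [ZMod.dft_apply, smul_eq_mul, mul_sum]
  refine Fintype.sum_equiv (Equiv.addRight a) _ _ fun l => ?_
  rw [Equiv.coe_addRight, ← mul_assoc, ← AddChar.map_add_eq_mul]
  ring_nf

lemma dft_cycLap (g : ZMod m → ℂ) (k : ℤ) :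
    ZMod.dft (cycLap m g) (k : ZMod m) = cycEig m k * ZMod.dft g (k : ZMod m) := by
  have shifts : cycLap m g = (2 : ℂ) • g - (fun l => g (l + 1)) - fun l => g (l + -1) := by
    funext l
    simp [cycLap, sub_eq_add_neg]
  rw [shifts, map_sub, map_sub, map_smul, Pi.sub_apply, Pi.sub_apply, dft_comp_add_right,
    dft_comp_add_right, ← two_sub_stdAddChar_sub, Pi.smul_apply, smul_eq_mul, one_mul, neg_one_mul]
  ring

lemma dft_eq_zero_of_mem_PWcyc {ω : ℝ} {g : ZMod m → ℂ} (hg : g ∈ PWcyc m ω) {k : ℤ}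
    (hk : ω < cycEig m k) : ZMod.dft g (k : ZMod m) = 0 := by
  suffices h : PWcyc m ω ≤ LinearMap.ker (LinearMap.proj (k : ZMod m) ∘ₗ ZMod.dft.toLinearMap) from
    h hg
  refine Submodule.span_le.2 ?_
  rintro g ⟨μ, hμ, eigen⟩
  have scaled : (cycEig m k : ℂ) * ZMod.dft g (k : ZMod m) = μ * ZMod.dft g (k : ZMod m) := by
    rw [← dft_cycLap, eigen, ZMod.dft_const_mul]
  have distinct : (cycEig m k : ℂ) ≠ μ := mod_cast (hμ.trans_lt hk).ne'
  exact (mul_eq_mul_right_iff.1 scaled).resolve_left distinct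

lemma sum_dft (g : ZMod m → ℂ) : ∑ k, ZMod.dft g k = m * g 0 := by
  simp only [← ZMod.dft_apply_zero, ZMod.dft_dft, neg_zero, smul_eq_mul]

lemma sum_Icc_intCast_eq_sum {M : Type*} [AddCommMonoid M] {n : ℕ} (hn : 2 * n < m)
    {f : ZMod m → M} (hf : ∀ k : ℤ, (n : ℤ) < |k| → 2 * |k| ≤ m → f (k : ZMod m) = 0) :
    ∑ k ∈ Icc (-(n : ℤ)) n, f (k : ZMod m) = ∑ k, f k := by
  have residue {k : ℤ} (hk : k ∈ Icc (-(n : ℤ)) n) : (k : ZMod m).valMinAbs = k := by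
    rw [mem_Icc] at hk
    exact (ZMod.valMinAbs_spec _ _).2 ⟨rfl, by constructor <;> omega⟩
  refine sum_of_injOn _ (fun j hj k hk hjk => ?_) (fun _ _ => mem_coe.2 (mem_univ _))
    (fun k _ hk => ?_) fun _ _ => rfl
  · rw [← residue hj, ← residue hk]
    exact congrArg ZMod.valMinAbs hjk
  · have outside : (n : ℤ) < |k.valMinAbs| := by
      by_contra! inside
      exact hk ⟨k.valMinAbs, mem_coe.2 (mem_Icc.2 (abs_le.1 inside)), k.coe_valMinAbs⟩
    have half : 2 * |k.valMinAbs| ≤ m := by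
      have := k.natAbs_valMinAbs_le
      rw [Int.abs_eq_natAbs]
      omega
    simpa only [ZMod.coe_valMinAbs] using hf k.valMinAbs outside half

end Cycle

section Dirichlet

lemma dirK_zero (m n : ℕ) : dirK m n 0 = 2 * n + 1 := by
  have card : ((n : ℤ) + 1 + n).toNat = 2 * n + 1 := by omega
  simp [dirK, card]

lemma norm_dirKbar_zero_sq (m n : ℕ) : ‖dirKbar m n 0‖ ^ 2 = (2 * n + 1) / m := by
  have hn : (2 * n + 1 : ℝ) ≠ 0 := by positivity
  have dirK_zero_norm : ‖dirK m n 0‖ = 2 * n + 1 := by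
    rw [dirK_zero]
    exact_mod_cast Complex.norm_natCast (2 * n + 1)
  rw [dirKbar, norm_div, dirK_zero_norm, Complex.norm_real, div_pow, Real.norm_eq_abs, sq_abs,
    Real.sq_sqrt (by positivity), sq, mul_div_mul_right _ _ hn]

variable {m : ℕ} [NeZero m]

lemma dirK_eq_sum_stdAddChar (n : ℕ) (l : ZMod m) :
    dirK m n l = ∑ k ∈ Icc (-(n : ℤ)) n, ZMod.stdAddChar ((k : ZMod m) * l) := by
  refine sum_congr rfl fun k _ => ?_
  have lift : (k : ZMod m) * l = ((k * (l.val : ℤ) : ℤ) : ZMod m) := by simp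
  rw [lift, ZMod.stdAddChar_coe]
  push_cast
  ring_nf

lemma dirKbar_mem_PWcyc {n : ℕ} {ω : ℝ} (hn : 2 * n ≤ m) (hω : cycEig m n ≤ ω) :
    dirKbar m n ∈ PWcyc m ω := by
  have expand : dirKbar m n = (Real.sqrt (m * (2 * n + 1)) : ℂ)⁻¹ •
      ∑ k ∈ Icc (-(n : ℤ)) n, fun l : ZMod m => ZMod.stdAddChar ((k : ZMod m) * l) := by
    funext l
    simp only [dirKbar, dirK_eq_sum_stdAddChar, Pi.smul_apply, Finset.sum_apply,
      smul_eq_mul, div_eq_inv_mul]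
  rw [expand]
  refine Submodule.smul_mem _ _ (Submodule.sum_mem _ fun k hk => Submodule.subset_span
    ⟨cycEig m k, (cycEig_le_cycEig ?_ ?_).trans hω, cycLap_stdAddChar k⟩)
  · simpa only [Nat.abs_cast, abs_le, mem_Icc] using hk
  · simpa only [Nat.abs_cast] using mod_cast hn

lemma sum_dirK_mul {n : ℕ} {ω : ℝ} (hn : 2 * n < m) (hω : ω < cycEig m (n + 1))
    {g : ZMod m → ℂ} (hg : g ∈ PWcyc m ω) : ∑ l, dirK m n l * g l = m * g 0 := by
  have vanish (k : ℤ) (hk : (n : ℤ) < |k|) (hk' : 2 * |k| ≤ m) :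
      ZMod.dft g (-(k : ZMod m)) = 0 := by
    rw [← Int.cast_neg]
    refine dft_eq_zero_of_mem_PWcyc hg (hω.trans_le ?_)
    rw [cycEig_neg]
    exact cycEig_le_cycEig ((abs_of_nonneg (by omega)).trans_le hk) hk'
  calc ∑ l, dirK m n l * g l
      = ∑ k ∈ Icc (-(n : ℤ)) n, ZMod.dft g (-(k : ZMod m)) := by
        simp only [dirK_eq_sum_stdAddChar, sum_mul, ZMod.dft_apply, mul_neg, neg_neg, smul_eq_mul]
        rw [sum_comm]
        simp only [mul_comm]
    _ = ∑ k, ZMod.dft g (-k) := sum_Icc_intCast_eq_sum (f := fun k => ZMod.dft g (-k)) hn vanish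
    _ = ∑ k, ZMod.dft g k := Equiv.sum_comp (Equiv.neg _) _
    _ = m * g 0 := sum_dft g

end Dirichlet

section BoxProduct

/-- The Paley–Wiener space of an operator `T`: the span of its eigenvectors with real eigenvalue
at most `Ω`. -/
def paleyWiener {E : Type*} [AddCommGroup E] [Module ℂ E] (T : Module.End ℂ E) (Ω : ℝ) :
    Submodule ℂ E :=
  Submodule.span ℂ {f | ∃ μ : ℝ, μ ≤ Ω ∧ T f = (μ : ℂ) • f}

variable {V : Type*}

/-- The operator `L ⊗ 1 + 1 ⊗ L(C_m)` on functions on `V × ZMod m`. When `L` is the Laplacian of a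
graph on `V`, it is the Laplacian of the Cartesian product of that graph with the cycle `C_m`. -/
def boxCycle (L : Module.End ℂ (V → ℂ)) (m : ℕ) : Module.End ℂ (V × ZMod m → ℂ) where
  toFun F x := L (fun u => F (u, x.2)) x.1 + cycLap m (fun l => F (x.1, l)) x.2
  map_add' F G := by
    funext x
    have slice : L (fun u => F (u, x.2) + G (u, x.2)) x.1 =
        L (fun u => F (u, x.2)) x.1 + L (fun u => G (u, x.2)) x.1 := congrFun (map_add L _ _) x.1
    simp only [Pi.add_apply, slice, cycLap]
    ring
  map_smul' c F := by
    funext x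
    have slice : L (fun u => c * F (u, x.2)) x.1 = c * L (fun u => F (u, x.2)) x.1 :=
      congrFun (map_smul L c _) x.1
    simp only [Pi.smul_apply, smul_eq_mul, RingHom.id_apply, slice, cycLap]
    ring

lemma boxCycle_tensor (L : Module.End ℂ (V → ℂ)) {m : ℕ} (f : V → ℂ) (g : ZMod m → ℂ) :
    boxCycle L m (tensor f g) = tensor (L f) g + tensor f (cycLap m g) := by
  funext x
  have slice : (fun u => tensor f g (u, x.2)) = g x.2 • f := funext fun u => mul_comm _ _
  have apply_slice : L (fun u => tensor f g (u, x.2)) x.1 = g x.2 * L f x.1 := by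
    rw [slice, map_smul, Pi.smul_apply, smul_eq_mul]
  rw [boxCycle, LinearMap.coe_mk, AddHom.coe_mk, apply_slice]
  simp only [cycLap, tensor, Pi.add_apply]
  ring

variable {L : Module.End ℂ (V → ℂ)} {m : ℕ} {lam ω : ℝ} {ψ : V → ℂ}

lemma tensor_mem_paleyWiener (hψ : L ψ = (lam : ℂ) • ψ) {g : ZMod m → ℂ} (hg : g ∈ PWcyc m ω) :
    tensor ψ g ∈ paleyWiener (boxCycle L m) (lam + ω) := by
  induction hg using Submodule.span_induction with
  | mem g hg =>
    obtain ⟨μ, hμ, eigen⟩ := hg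
    refine Submodule.subset_span ⟨lam + μ, by gcongr, ?_⟩
    rw [boxCycle_tensor, hψ, eigen]
    funext x
    simp only [tensor, Pi.add_apply, Pi.smul_apply, smul_eq_mul, Complex.ofReal_add]
    ring
  | zero =>
    convert zero_mem (paleyWiener (boxCycle L m) (lam + ω))
    exact funext fun _ => mul_zero _
  | add g h _ _ hg hh =>
    convert add_mem hg hh
    exact funext fun _ => mul_add _ _ _
  | smul c g _ hg =>
    convert Submodule.smul_mem _ c hg
    exact funext fun _ => mul_left_comm _ _ _

variable [Fintype V]

lemma cycLap_partialIp (f : V → ℂ) (G : V × ZMod m → ℂ) :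
    cycLap m (partialIp f G) = partialIp f fun x => cycLap m (fun l => G (x.1, l)) x.2 := by
  funext l
  have slice : (fun u => cycLap m (fun l => G (u, l)) l) =
      (2 : ℂ) • (fun u => G (u, l)) - (fun u => G (u, l + 1)) - fun u => G (u, l - 1) := rfl
  rw [partialIp, slice, ip_sub_right, ip_sub_right, ip_smul_right, map_ofNat]
  rfl

lemma partialIp_boxCycle (hL : ∀ f g, ip (L f) g = ip f (L g)) (f : V → ℂ) (G : V × ZMod m → ℂ) :
    partialIp f (boxCycle L m G) = partialIp (L f) G + cycLap m (partialIp f G) := by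
  funext l
  rw [Pi.add_apply, cycLap_partialIp, partialIp, partialIp, hL]
  exact ip_add_right _ _ _

lemma partialIp_mem_PWcyc (hL : ∀ f g, ip (L f) g = ip f (L g)) (hψ : L ψ = (lam : ℂ) • ψ)
    {G : V × ZMod m → ℂ} (hG : G ∈ paleyWiener (boxCycle L m) (lam + ω)) :
    partialIp ψ G ∈ PWcyc m ω := by
  induction hG using Submodule.span_induction with
  | mem G hG =>
    obtain ⟨μ, hμ, eigen⟩ := hG
    refine Submodule.subset_span ⟨μ - lam, by linarith, funext fun l => ?_⟩
    have key := congrFun (partialIp_boxCycle hL ψ G) l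
    have left : partialIp ψ ((μ : ℂ) • G) l = μ * partialIp ψ G l :=
      (ip_smul_right _ _ _).trans (by rw [Complex.conj_ofReal, partialIp])
    rw [eigen, hψ, left, Pi.add_apply, partialIp, partialIp, ip_smul_left] at key
    simp only [partialIp] at key ⊢
    push_cast
    linear_combination -key
  | zero =>
    convert zero_mem (PWcyc m ω)
    exact funext fun _ => ip_zero_right _
  | add G H _ _ hG hH =>
    convert add_mem hG hH
    exact funext fun _ => ip_add_right _ _ _
  | smul c G _ hG =>
    convert Submodule.smul_mem _ (starRingEnd ℂ c) hG
    exact funext fun _ => ip_smul_right _ _ _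

end BoxProduct

section Concentration

variable {V : Type*} [Fintype V] {m n : ℕ} [NeZero m]

lemma ip_truncateZero_tensor_dirKbar {ω : ℝ} (hn : 2 * n < m) (hω : ω < cycEig m (n + 1))
    {ψ : V → ℂ} {G : V × ZMod m → ℂ} (hG : partialIp ψ G ∈ PWcyc m ω) :
    ip (truncateZero (tensor ψ (dirKbar m n))) G =
      ip ((((2 * n + 1) / m : ℝ) : ℂ) • tensor ψ (dirKbar m n)) G := by
  have hm : (m : ℂ) ≠ 0 := NeZero.ne _
  have reproduce : ∑ l, dirKbar m n l * partialIp ψ G l =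
      m * partialIp ψ G 0 / Real.sqrt (m * (2 * n + 1)) := by
    rw [← sum_dirK_mul hn hω hG, sum_div]
    exact sum_congr rfl fun l _ => div_mul_eq_mul_div _ _ _
  rw [ip_truncateZero_tensor_left, ip_smul_left, ip_tensor_left, reproduce, dirKbar, dirK_zero]
  push_cast
  field_simp

lemma sum_norm_sq_ip_truncateZero_tensor_dirKbar {ι : Type*} [Fintype ι] [DecidableEq ι]
    {e : ι → V → ℂ} (he : ∀ i j, ip (e i) (e j) = if i = j then 1 else 0)
    {F : V × ZMod m → ℂ} (hF : (fun u => F (u, 0)) ∈ Submodule.span ℂ (Set.range e)) :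
    ∑ i, ‖ip F (truncateZero (tensor (e i) (dirKbar m n)))‖ ^ 2 =
      (2 * n + 1) / m * ∑ x, ‖truncateZero F x‖ ^ 2 := by
  simp only [ip_truncateZero_tensor_right, norm_mul, mul_pow, RCLike.norm_conj,
    norm_dirKbar_zero_sq, ← mul_sum, sum_norm_sq_ip_of_mem_span he hF, sum_norm_sq_truncateZero]

theorem stmt15_general (L : Module.End ℂ (V → ℂ)) (hL : ∀ f g, ip (L f) g = ip f (L g))
    {ω Ω : ℝ} (hn : 2 * n < m) (hlo : cycEig m n ≤ ω) (hhi : ω < cycEig m (n + 1))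
    {ψ : V → ℂ} (hψ : L ψ = ((Ω - ω : ℝ) : ℂ) • ψ) :
    tensor ψ (dirKbar m n) ∈ paleyWiener (boxCycle L m) Ω ∧
    (∀ G ∈ paleyWiener (boxCycle L m) Ω,
      ip (truncateZero (tensor ψ (dirKbar m n))) G =
        ip ((((2 * n + 1) / m : ℝ) : ℂ) • tensor ψ (dirKbar m n)) G) ∧
    (∀ {ι : Type*} [Fintype ι] [DecidableEq ι] (e : ι → V → ℂ),
      (∀ i j, ip (e i) (e j) = if i = j then 1 else 0) →
      ∀ F : V × ZMod m → ℂ, (fun u => F (u, 0)) ∈ Submodule.span ℂ (Set.range e) →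
        ∑ i, ‖ip F (truncateZero (tensor (e i) (dirKbar m n)))‖ ^ 2 =
          (2 * n + 1) / m * ∑ x, ‖truncateZero F x‖ ^ 2) := by
  rw [← sub_add_cancel Ω ω]
  exact ⟨tensor_mem_paleyWiener hψ (dirKbar_mem_PWcyc hn.le hlo),
    fun G hG => ip_truncateZero_tensor_dirKbar hn hhi (partialIp_mem_PWcyc hL hψ hG),
    fun e he F hF => sum_norm_sq_ip_truncateZero_tensor_dirKbar he hF⟩

end Concentration

section Cube

/-- The Laplacian `cubeLap N` of the Boolean cube, bundled as a linear operator. -/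
def cubeLapEnd (N : ℕ) : Module.End ℂ (Vtx N → ℂ) where
  toFun := cubeLap N
  map_add' f g := by
    funext v
    simp only [cubeLap, Pi.add_apply, ← sum_add_distrib, add_sub_add_comm]
  map_smul' c f := by
    funext v
    simp only [cubeLap, Pi.smul_apply, smul_eq_mul, RingHom.id_apply, mul_sum, mul_sub]

lemma cubeAdj_comm {N : ℕ} (v w : Vtx N) : cubeAdj v w ↔ cubeAdj w v := by
  simp only [cubeAdj, ne_comm]

lemma ip_cubeLap_left {N : ℕ} (f g : Vtx N → ℂ) : ip (cubeLap N f) g = ip f (cubeLap N g) := by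
  simp only [ip, cubeLap, sum_mul, mul_sum, map_sum, map_sub, sub_mul, mul_sub, sum_sub_distrib]
  congr 1
  simp only [sum_filter]
  rw [sum_comm]
  simp only [cubeAdj_comm]

lemma cubeLap_slice_of_mem_S2 {N K m : ℕ} {F : Vtx N × ZMod m → ℂ} (hF : F ∈ S2 N K m)
    (l : ZMod m) :
    cubeLap N (fun u => F (u, l)) = fun v => ((2 * (K : ℝ) - 2 : ℝ) : ℂ) * F (v, l) := by
  let W := (cubeLapEnd N).eigenspace ((2 * (K : ℝ) - 2 : ℝ) : ℂ)
  suffices h : S2 N K m ≤ W.comap (LinearMap.funLeft ℂ ℂ fun u => (u, l)) from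
    Module.End.mem_eigenspace_iff.1 (h hF)
  refine Submodule.span_le.2 ?_
  rintro _ ⟨f, g, hf, -, rfl⟩
  have slice : (fun u => f u * g l) = g l • f := funext fun u => mul_comm _ _
  change (fun u => f u * g l) ∈ W
  rw [slice]
  exact W.smul_mem _ (Module.End.mem_eigenspace_iff.2 hf)

end Cube

lemma two_mul_add_one_div_four_mul_add_one (n : ℕ) :
    (2 * n + 1 : ℝ) / (4 * n + 1 : ℕ) = 1 / 2 + 1 / (2 * ((4 * n + 1 : ℕ) : ℝ)) := by
  push_cast
  field_simp
  ring

/-- for m = 4m'+1 and ψ ∈ Λ_{2K−2}(B_N), the function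
F = ψ ⊗ D̄_{m'} lies in PW_{2K}(B_N □ C_m) and PQF = (1/2 + 1/(2m))·F
(P(QF) = cF is expressed by: cF ∈ PW and QF − cF ⊥ PW_{2K}); moreover for an
orthonormal basis {ψ_ν} of Λ_{2K−2}(B_N), every F in the span of
Λ_{2K−2}(B_N) ⊗ PW_2(C_m) satisfies
Σ_ν |⟨F, Q(ψ_ν ⊗ D̄_{m'})⟩|² = (1/2 + 1/(2m))·‖QF‖². -/
theorem stmt15 (N K m' : ℕ) (hm' : 1 ≤ m') (hK : 1 ≤ K) (hKN : K ≤ N)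
    (ψ : Vtx N → ℂ)
    (hψ : cubeLap N ψ = fun v => ((2 * (K : ℝ) - 2 : ℝ) : ℂ) * ψ v) :
    (fun x : Vtx N × ZMod (4 * m' + 1) => ψ x.1 * dirKbar (4 * m' + 1) m' x.2) ∈
        PWprod N (4 * m' + 1) (2 * (K : ℝ)) ∧
    (∀ G ∈ PWprod N (4 * m' + 1) (2 * (K : ℝ)),
      ip (Qslice N (4 * m' + 1) (fun x => ψ x.1 * dirKbar (4 * m' + 1) m' x.2)) G =
        ip (fun x => ((1 / 2 + 1 / (2 * ((4 * m' + 1 : ℕ) : ℝ)) : ℝ) : ℂ) *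
          (ψ x.1 * dirKbar (4 * m' + 1) m' x.2)) G) ∧
    (∀ ψs : Fin (N.choose (K - 1)) → (Vtx N → ℂ),
      (∀ ν, cubeLap N (ψs ν) = fun v => ((2 * (K : ℝ) - 2 : ℝ) : ℂ) * ψs ν v) →
      (∀ ν ν', ip (ψs ν) (ψs ν') = if ν = ν' then 1 else 0) →
      (∀ f : Vtx N → ℂ, (cubeLap N f = fun v => ((2 * (K : ℝ) - 2 : ℝ) : ℂ) * f v) →
        f ∈ Submodule.span ℂ (Set.range ψs)) →
      ∀ F ∈ S2 N K (4 * m' + 1),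
        ∑ ν, ‖ip F (Qslice N (4 * m' + 1)
            (fun x => ψs ν x.1 * dirKbar (4 * m' + 1) m' x.2))‖ ^ 2 =
          (1 / 2 + 1 / (2 * ((4 * m' + 1 : ℕ) : ℝ))) *
            ∑ x, ‖Qslice N (4 * m' + 1) F x‖ ^ 2) := by
  obtain ⟨mem, eigen, parseval⟩ := stmt15_general (cubeLapEnd N) ip_cubeLap_left
    (m := 4 * m' + 1) (n := m') (ω := 2) (Ω := 2 * (K : ℝ)) (by omega)
    (cycEig_le_two (by omega)) (mod_cast two_lt_cycEig (by omega) (by omega)) hψ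
  rw [← two_mul_add_one_div_four_mul_add_one]
  exact ⟨mem, eigen, fun e _ orthonormal spans F hF =>
    parseval e orthonormal F (spans _ (cubeLap_slice_of_mem_S2 hF 0))⟩
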